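/- Let φ be a 3-SAT formula with clauses c_1,…,c_ℓ over variables x_1,…,x_m, let β ∈ (0,1), and let ε satisfy 0 < ε < min{(1−β)^2, β(1−β)^3/(1+β), β(1−β)^2/(1+β)}. If the task graph G(φ,β,ε) admits a cost configuration that is motivating for the reward 1/β, then φ has a satisfying assignment; indeed, the assignment τ defined by τ(x_k) = T if the agent's walk visits w_{k,T} and τ(x_k) = F if it visits w_{k,F} satisfies every clause of φ. -/

import Mathlib

/-!
Write `f = (1 - β)³ - ε > 0` for the cost of a forward edge, and fix a motivating cost
configuration. Since `β · (1/β) = 1`, the agent only takes edges of perceived cost at most `1`.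
Everything follows from lower bounds on distances to `t`, which are obtained from potentials
(`le_dcost_of_potential`, `le_dcost`).

Every variable node is at distance at least `2 - β` from `t`. If the agent visits a variable
node `w`, she cannot continue to the adjacent intermediate node, where she would face a cost of
`2 - β > 1`; so she prefers a forward edge, of perceived cost at least `f + β (2 - β)`, and this
forces the extra cost of the type-three shortcut at `w` to be at least `f` (`shortcut_extra`).
Hence `w` is at distance at least `2 - β + f`. Consequently:

* the agent never takes a type-one shortcut: its head would be visited, and then its perceived
  cost would be at least `(1 - β)² + β (2 - β + f) = 1 + β f > 1`;
* the agent never enters a literal node `v` whose type-one shortcut leads to a visited variable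
  node: `v` would be at distance at least `(1 - β)² + (2 - β) + f`, so entering it would have
  perceived cost at least `1 - ε + β f`, which exceeds `1` because `ε (1 + β) < β (1 - β)³`.

So the agent passes through a literal node of every clause, whose shortcut leads to an unvisited
variable node (`exists_lit`), and through a node of every variable (`exists_var`). The literal
met in a clause is therefore true under every assignment read off from visited variable nodes.
-/

/-!
Framework: task graphs, present-biased agents, perceived costs, greedy walks,
motivating rewards, cost configurations and subgraphs
(Kleinberg–Oren model, following Albers–Kraft).
-/

variable {V : Type} [Fintype V] [DecidableEq V]

/-- The list of (directed) edges traversed by a walk given as a list of vertices. -/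
def walkEdges (p : List V) : List (V × V) := p.zip p.tail

/-- `p` is a walk in the edge set `E`: consecutive vertices are joined by edges. -/
def IsWalk (E : Finset (V × V)) (p : List V) : Prop :=
  List.Chain' (fun u v : V => (u, v) ∈ E) p

/-- `p` is a walk in `E` from `a` to `b`. -/
def IsWalkFrom (E : Finset (V × V)) (p : List V) (a b : V) : Prop :=
  IsWalk E p ∧ p.head? = some a ∧ p.getLast? = some b

/-- There is a walk in `E` from `a` to `b`. -/
def Reaches (E : Finset (V × V)) (a b : V) : Prop :=
  ∃ p : List V, IsWalkFrom E p a b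

/-- Total cost of a walk. -/
noncomputable def walkCost (c : V × V → ℝ) (p : List V) : ℝ :=
  ((walkEdges p).map c).sum

/-- A task graph: a finite DAG with source `s`, target `t`, nonnegative edge
costs, in which every node lies on some directed path from `s` to `t`. -/
structure TaskGraph (V : Type) [Fintype V] [DecidableEq V] where
  E : Finset (V × V)
  s : V
  t : V
  c : V × V → ℝ
  c_nonneg : ∀ e ∈ E, 0 ≤ c e
  acyclic : ∀ p : List V, IsWalk E p → p.Nodup
  onPath : ∀ v : V, ∃ p : List V, IsWalkFrom E p s t ∧ v ∈ p

/-- `dcost E c t v` : cost of a cheapest walk from `v` to `t` in `E` w.r.t. costs `c`. -/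
noncomputable def dcost (E : Finset (V × V)) (c : V × V → ℝ) (t v : V) : ℝ :=
  sInf (walkCost c '' {p : List V | IsWalkFrom E p v t})

/-- Perceived cost `η(v,w) = c(v,w) + β d(w)` of an edge for a `β`-present-biased agent. -/
noncomputable def etaCost (E : Finset (V × V)) (c : V × V → ℝ) (t : V) (β : ℝ)
    (e : V × V) : ℝ :=
  c e + β * dcost E c t e.2

/-- Lowest perceived cost `ζ(v)`: the infimum of `η(v,w)` over edges `(v,w) ∈ E`
whose head `w` admits a continuation to `t` (i.e. over the agent's possible plans). -/
noncomputable def zetaCost (E : Finset (V × V)) (c : V × V → ℝ) (t : V) (β : ℝ)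
    (v : V) : ℝ :=
  sInf {x : ℝ | ∃ w : V, (v, w) ∈ E ∧ Reaches E w t ∧ etaCost E c t β (v, w) = x}

/-- One step of the agent's greedy walk for reward `r`: she traverses only
edges realizing the lowest perceived cost, and only if `ζ(v) ≤ β r`. -/
def GreedyStep (E : Finset (V × V)) (c : V × V → ℝ) (t : V) (β r : ℝ) (v w : V) : Prop :=
  v ≠ t ∧ (v, w) ∈ E ∧ Reaches E w t ∧
    etaCost E c t β (v, w) = zetaCost E c t β v ∧ zetaCost E c t β v ≤ β * r

/-- Nodes the agent may visit on some greedy walk from `s`. -/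
inductive AgentReach (E : Finset (V × V)) (c : V × V → ℝ) (s t : V) (β r : ℝ) : V → Prop
  | start : AgentReach E c s t β r s
  | step {v w : V} : AgentReach E c s t β r v → GreedyStep E c t β r v w →
      AgentReach E c s t β r w

/-- The task graph (with edge set `E`, costs `c`) is motivating for reward `r`:
at every node the agent may reach, she neither abandons nor gets stuck,
i.e. she can always perform a greedy step (hence, the graph being a finite DAG,
she reaches `t` on every greedy walk). -/
def Motivating (E : Finset (V × V)) (c : V × V → ℝ) (s t : V) (β r : ℝ) : Prop :=
  ∀ v : V, AgentReach E c s t β r v → v ≠ t → ∃ w : V, GreedyStep E c t β r v w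

/-- A complete greedy walk of the agent from `s` to `t`. -/
def AgentWalk (E : Finset (V × V)) (c : V × V → ℝ) (s t : V) (β r : ℝ) (p : List V) : Prop :=
  IsWalkFrom E p s t ∧ List.Chain' (GreedyStep E c t β r) p

/-- An initial segment of a greedy walk of the agent starting at `s`. -/
def GreedyPrefix (E : Finset (V × V)) (c : V × V → ℝ) (s t : V) (β r : ℝ) (p : List V) : Prop :=
  p.head? = some s ∧ List.Chain' (GreedyStep E c t β r) p

/-- A cost configuration: nonnegative extra costs on the edges. -/
def CostConfig (c' : V × V → ℝ) : Prop := ∀ e : V × V, 0 ≤ c' e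

/-- The modified costs obtained by applying a cost configuration to `G`. -/
noncomputable def addc (G : TaskGraph V) (c' : V × V → ℝ) : V × V → ℝ :=
  fun e => G.c e + c' e

/-- The cost configuration `c'` is motivating for reward `r` on `G`. -/
def MotivatingConfig (G : TaskGraph V) (β r : ℝ) (c' : V × V → ℝ) : Prop :=
  Motivating G.E (addc G c') G.s G.t β r

/-- The subgraph of `G` with edge set `E'` (retaining an `s`–`t` path) is
motivating for reward `r`; all quantities are computed within the subgraph. -/
def MotivatingSubgraph (G : TaskGraph V) (β r : ℝ) (E' : Finset (V × V)) : Prop :=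
  E' ⊆ G.E ∧ (∃ p : List V, IsWalkFrom E' p G.s G.t) ∧ Motivating E' G.c G.s G.t β r

/-! The node set of the 3-SAT reduction graph `G(φ, β, ε)`. A 3-SAT formula with
`ℓ` clauses over `m` variables is encoded as `φ : Fin ℓ → Fin 3 → Fin m × Bool`,
where `φ i j = (k, b)` says that the `j`-th literal of clause `i` is `x_k` (if
`b = true`) resp. `¬ x_k` (if `b = false`). An assignment `τ : Fin m → Bool`
satisfies `φ` iff every clause contains a literal `(k, b)` with `τ k = b`. -/

/-- Nodes of `G(φ, β, ε)`: the special nodes `s, t, u₁, …, u₅`, the literal nodes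
`v_{i,j}`, the variable nodes `w_{k,y}` and the intermediate nodes `z_{k,y}`. -/
abbrev SatNode (ℓ m : ℕ) : Type :=
  Fin 7 ⊕ (Fin ℓ × Fin 3) ⊕ (Fin m × Bool) ⊕ (Fin m × Bool)

/-- The source `s`. -/
def nS {ℓ m : ℕ} : SatNode ℓ m := Sum.inl 0

/-- The target `t`. -/
def nT {ℓ m : ℕ} : SatNode ℓ m := Sum.inl 1

/-- The node `u_{i+1}` for `i : Fin 5`. -/
def nU {ℓ m : ℕ} (i : Fin 5) : SatNode ℓ m := Sum.inl ⟨(i : ℕ) + 2, by omega⟩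

/-- The literal node `v_{i,j}` (`0`-indexed). -/
def nLit {ℓ m : ℕ} (i : Fin ℓ) (j : Fin 3) : SatNode ℓ m := Sum.inr (Sum.inl (i, j))

/-- The variable node `w_{k,y}` (`0`-indexed; `y = true` means `T`). -/
def nVar {ℓ m : ℕ} (k : Fin m) (y : Bool) : SatNode ℓ m :=
  Sum.inr (Sum.inr (Sum.inl (k, y)))

/-- The intermediate node `z_{k,y}` of the type-three shortcut out of `w_{k,y}`. -/
def nMid {ℓ m : ℕ} (k : Fin m) (y : Bool) : SatNode ℓ m :=
  Sum.inr (Sum.inr (Sum.inr (k, y)))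

/-- The edge relation of the 3-SAT reduction graph `G(φ, β, ε)`. -/
def SatEdge {ℓ m : ℕ} (φ : Fin ℓ → Fin 3 → Fin m × Bool) (a b : SatNode ℓ m) : Prop :=
  -- forward edges s → v_{1,j}
  (∃ (i : Fin ℓ) (j : Fin 3), (i : ℕ) = 0 ∧ a = nS ∧ b = nLit i j) ∨
  -- forward edges v_{i,j} → v_{i+1,j'}
  (∃ (i i' : Fin ℓ) (j j' : Fin 3), (i' : ℕ) = (i : ℕ) + 1 ∧ a = nLit i j ∧ b = nLit i' j') ∨
  -- forward edges v_{ℓ,j} → u₁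
  (∃ (i : Fin ℓ) (j : Fin 3), (i : ℕ) = ℓ - 1 ∧ a = nLit i j ∧ b = nU 0) ∨
  -- forward edges u₂ → w_{1,y}
  (∃ (k : Fin m) (y : Bool), (k : ℕ) = 0 ∧ a = nU 1 ∧ b = nVar k y) ∨
  -- forward edges w_{k,y} → w_{k+1,y'}
  (∃ (k k' : Fin m) (y y' : Bool), (k' : ℕ) = (k : ℕ) + 1 ∧ a = nVar k y ∧ b = nVar k' y') ∨
  -- forward edges w_{m,y} → u₃
  (∃ (k : Fin m) (y : Bool), (k : ℕ) = m - 1 ∧ a = nVar k y ∧ b = nU 2) ∨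
  -- shortcuts of type one: v_{i,j} → w_{k,F} if the j-th literal of cᵢ is x_k,
  -- and v_{i,j} → w_{k,T} if it is ¬x_k
  (∃ (i : Fin ℓ) (j : Fin 3), a = nLit i j ∧ b = nVar (φ i j).1 (!(φ i j).2)) ∨
  -- shortcut of type two: u₂ → t
  (a = nU 1 ∧ b = nT) ∨
  -- shortcuts of type three: w_{k,y} → z_{k,y} → t
  (∃ (k : Fin m) (y : Bool), a = nVar k y ∧ b = nMid k y) ∨
  (∃ (k : Fin m) (y : Bool), a = nMid k y ∧ b = nT) ∨
  -- the remaining edges u₁ → u₂, u₃ → u₄, u₄ → u₅, u₅ → t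
  (a = nU 0 ∧ b = nU 1) ∨ (a = nU 2 ∧ b = nU 3) ∨ (a = nU 3 ∧ b = nU 4) ∨ (a = nU 4 ∧ b = nT)

/-- The costs of the edges of the 3-SAT reduction graph `G(φ, β, ε)`:
forward edges cost `(1−β)³ − ε`, type-one shortcuts cost `(1−β)²`, the type-two
shortcut costs `2 − β`, type-three shortcuts cost `0` and `2 − β`, and the edges
`u₁u₂, u₃u₄, u₄u₅, u₅t` cost `(1−β)², (1−β)², 1−β, 1`. -/
def SatCostSpec {ℓ m : ℕ} (β ε : ℝ) (G : TaskGraph (SatNode ℓ m)) : Prop :=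
  (∀ (i : Fin ℓ) (j : Fin 3), G.c (nS, nLit i j) = (1 - β) ^ 3 - ε) ∧
  (∀ (i i' : Fin ℓ) (j j' : Fin 3), G.c (nLit i j, nLit i' j') = (1 - β) ^ 3 - ε) ∧
  (∀ (i : Fin ℓ) (j : Fin 3), G.c (nLit i j, nU 0) = (1 - β) ^ 3 - ε) ∧
  (∀ (k : Fin m) (y : Bool), G.c (nU 1, nVar k y) = (1 - β) ^ 3 - ε) ∧
  (∀ (k k' : Fin m) (y y' : Bool), G.c (nVar k y, nVar k' y') = (1 - β) ^ 3 - ε) ∧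
  (∀ (k : Fin m) (y : Bool), G.c (nVar k y, nU 2) = (1 - β) ^ 3 - ε) ∧
  (∀ (i : Fin ℓ) (j : Fin 3) (k : Fin m) (y : Bool), G.c (nLit i j, nVar k y) = (1 - β) ^ 2) ∧
  (G.c (nU 1, nT) = 2 - β) ∧
  (∀ (k : Fin m) (y : Bool), G.c (nVar k y, nMid k y) = 0) ∧
  (∀ (k : Fin m) (y : Bool), G.c (nMid k y, nT) = 2 - β) ∧
  (G.c (nU 0, nU 1) = (1 - β) ^ 2) ∧
  (G.c (nU 2, nU 3) = (1 - β) ^ 2) ∧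
  (G.c (nU 3, nU 4) = 1 - β) ∧
  (G.c (nU 4, nT) = 1)

/-- `G` is the 3-SAT reduction task graph `G(φ, β, ε)`. -/
def IsSatGraph {ℓ m : ℕ} (φ : Fin ℓ → Fin 3 → Fin m × Bool) (β ε : ℝ)
    (G : TaskGraph (SatNode ℓ m)) : Prop :=
  G.s = nS ∧ G.t = nT ∧ (∀ a b : SatNode ℓ m, (a, b) ∈ G.E ↔ SatEdge φ a b) ∧
    SatCostSpec β ε G

/-! ### Distances and perceived costs in general graphs -/

theorem walkCost_cons_cons {V : Type} (c : V × V → ℝ) (a b : V) (l : List V) :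
    walkCost c (a :: b :: l) = c (a, b) + walkCost c (b :: l) := by
  simp [walkCost, walkEdges]

/-- A potential that vanishes at `t` and drops by at most the cost along each edge bounds the
cost of every walk to `t` from below. -/
theorem le_walkCost_of_potential {V : Type} (E : Finset (V × V))
    (c : V × V → ℝ) (t : V) (h : V → ℝ) (ht : h t ≤ 0)
    (he : ∀ a b, (a, b) ∈ E → h a ≤ c (a, b) + h b) :
    ∀ (p : List V) (v : V), IsWalkFrom E p v t → h v ≤ walkCost c p := by
  intro p
  induction p with
  | nil => intro v hp; simp [IsWalkFrom] at hp
  | cons a l ih =>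
    intro v hp
    obtain ⟨h1, h2, h3⟩ := hp
    obtain rfl : a = v := by simpa using h2
    cases l with
    | nil =>
      obtain rfl : a = t := by simpa using h3
      simpa [walkCost, walkEdges] using ht
    | cons b l =>
      have h4 := List.isChain_cons_cons.mp h1
      rw [walkCost_cons_cons]
      have := ih b ⟨h4.2, rfl, by simpa using h3⟩
      have := he a b h4.1
      linarith

theorem le_dcost_of_potential {V : Type} (E : Finset (V × V))
    (c : V × V → ℝ) (t : V) (h : V → ℝ) (ht : h t ≤ 0)
    (he : ∀ a b, (a, b) ∈ E → h a ≤ c (a, b) + h b) (v : V) (hv : Reaches E v t) :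
    h v ≤ dcost E c t v := by
  obtain ⟨p, hp⟩ := hv
  refine le_csInf ⟨_, p, hp, rfl⟩ ?_
  rintro _ ⟨q, hq, rfl⟩
  exact le_walkCost_of_potential E c t h ht he q v hq

theorem dcost_nonneg {V : Type} (E : Finset (V × V))
    (c : V × V → ℝ) (t : V) (hc : ∀ e ∈ E, 0 ≤ c e) (v : V) : 0 ≤ dcost E c t v := by
  refine Real.sInf_nonneg ?_
  rintro _ ⟨q, hq, rfl⟩
  exact le_walkCost_of_potential E c t (fun _ => 0) le_rfl
    (fun a b hab => by simpa using hc _ hab) q v hq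

theorem dcost_le_edge {V : Type} (E : Finset (V × V))
    (c : V × V → ℝ) (t : V) (hc : ∀ e ∈ E, 0 ≤ c e) (v : V) (hv : (v, t) ∈ E) :
    dcost E c t v ≤ c (v, t) := by
  refine csInf_le ⟨0, ?_⟩ ⟨[v, t], ⟨?_, rfl, rfl⟩, ?_⟩
  · rintro _ ⟨q, hq, rfl⟩
    exact le_walkCost_of_potential E c t (fun _ => 0) le_rfl
      (fun a b hab => by simpa using hc _ hab) q v hq
  · exact List.isChain_pair.mpr hv
  · simp [walkCost, walkEdges]

theorem zetaCost_le {V : Type} (E : Finset (V × V))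
    (c : V × V → ℝ) (t : V) (β : ℝ) (hβ : 0 ≤ β) (hc : ∀ e ∈ E, 0 ≤ c e) (v w : V)
    (hvw : (v, w) ∈ E) (hw : Reaches E w t) :
    zetaCost E c t β v ≤ etaCost E c t β (v, w) := by
  refine csInf_le ⟨0, ?_⟩ ⟨w, hvw, hw, rfl⟩
  rintro _ ⟨x, hx, -, rfl⟩
  exact add_nonneg (hc _ hx) (mul_nonneg hβ (dcost_nonneg E c t hc x))

theorem agentReach_of_mem {V : Type} (E : Finset (V × V))
    (c : V × V → ℝ) (s t : V) (β r : ℝ) (p : List V)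
    (hp : List.IsChain (GreedyStep E c t β r) p) :
    ∀ a, p.head? = some a → AgentReach E c s t β r a →
      ∀ v ∈ p, AgentReach E c s t β r v := by
  induction p with
  | nil => simp
  | cons b l ih =>
    intro a ha hr v hv
    obtain rfl : b = a := by simpa using ha
    rcases List.mem_cons.mp hv with rfl | hv
    · exact hr
    cases l with
    | nil => simp at hv
    | cons x l =>
      have h4 := List.isChain_cons_cons.mp hp
      exact ih h4.2 x rfl (hr.step h4.1) v hv

/-! ### Lower bounds on distances in the reduction graph -/

section Reduction

variable {ℓ m : ℕ}

open Classical in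
/-- A potential on `G(φ, β, ε)`, for a set `R` of nodes (to be thought of as the nodes the agent
visits), the forward edge cost `f`, and the extra cost `g k y` of the edge from `z_{k,y}` to `t`.
A variable node has value `2 - β`, raised by `f` if it is in `R`; the raise propagates to the
literal nodes whose type-one shortcut leads to it. The value at `s` plays no role. -/
noncomputable def satPot (φ : Fin ℓ → Fin 3 → Fin m × Bool) (β f : ℝ)
    (R : SatNode ℓ m → Prop) (g : Fin m → Bool → ℝ) : SatNode ℓ m → ℝ
  | Sum.inl i =>
      ![0, 0, (1 - β) ^ 2 + (2 - β), 2 - β, (1 - β) ^ 2 + (2 - β), 2 - β, 1] i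
  | Sum.inr (Sum.inl (i, j)) =>
      (1 - β) ^ 2 + (2 - β) + if R (nVar (φ i j).1 (!(φ i j).2)) then f else 0
  | Sum.inr (Sum.inr (Sum.inl (k, y))) => 2 - β + if R (nVar k y) then f else 0
  | Sum.inr (Sum.inr (Sum.inr (k, y))) => 2 - β + g k y

section Values

variable (φ : Fin ℓ → Fin 3 → Fin m × Bool) (β f : ℝ) (R : SatNode ℓ m → Prop)
  (g : Fin m → Bool → ℝ)

theorem satPot_s : satPot φ β f R g nS = 0 := rfl
theorem satPot_t : satPot φ β f R g nT = 0 := rfl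
theorem satPot_u1 : satPot φ β f R g (nU 0) = (1 - β) ^ 2 + (2 - β) := rfl
theorem satPot_u2 : satPot φ β f R g (nU 1) = 2 - β := rfl
theorem satPot_u3 : satPot φ β f R g (nU 2) = (1 - β) ^ 2 + (2 - β) := rfl
theorem satPot_u4 : satPot φ β f R g (nU 3) = 2 - β := rfl
theorem satPot_u5 : satPot φ β f R g (nU 4) = 1 := rfl

open Classical in
theorem satPot_lit (i : Fin ℓ) (j : Fin 3) : satPot φ β f R g (nLit i j) =
    (1 - β) ^ 2 + (2 - β) + if R (nVar (φ i j).1 (!(φ i j).2)) then f else 0 := rfl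

open Classical in
theorem satPot_var (k : Fin m) (y : Bool) :
    satPot φ β f R g (nVar k y) = 2 - β + if R (nVar k y) then f else 0 := rfl

theorem satPot_mid (k : Fin m) (y : Bool) :
    satPot φ β f R g (nMid k y) = 2 - β + g k y := rfl

end Values

variable {φ : Fin ℓ → Fin 3 → Fin m × Bool} {β ε : ℝ} {G : TaskGraph (SatNode ℓ m)}
  {c' : SatNode ℓ m × SatNode ℓ m → ℝ}

/-- The potential `satPot` is a lower bound on distances as soon as, at the nodes of `R`, the
extra cost of the type-three shortcut is at least the forward edge cost. -/
theorem le_dcost (hβ0 : 0 < β) (hβ1 : β < 1) (hf : 0 < (1 - β) ^ 3 - ε)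
    (hG : IsSatGraph φ β ε G) (hc : CostConfig c') (R : SatNode ℓ m → Prop)
    (hR : ∀ k y, R (nVar k y) →
      (1 - β) ^ 3 - ε ≤ c' (nVar k y, nMid k y) + c' (nMid k y, nT))
    (v : SatNode ℓ m) (hv : Reaches G.E v nT) :
    satPot φ β ((1 - β) ^ 3 - ε) R (fun k y => c' (nMid k y, nT)) v
      ≤ dcost G.E (addc G c') nT v := by
  obtain ⟨-, -, hE, h1, h2, h3, h4, h5, h6, h7, h8, h9, h10, h11, h12, h13, h14⟩ := hG
  refine le_dcost_of_potential _ _ _ _ (satPot_t ..).le ?_ v hv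
  intro a b hab
  have hc' := hc (a, b)
  have hsq : 0 ≤ (1 - β) ^ 2 := sq_nonneg _
  simp only [addc]
  rcases (hE a b).1 hab with ⟨i, j, -, rfl, rfl⟩ | ⟨i, i', j, j', -, rfl, rfl⟩ |
    ⟨i, j, -, rfl, rfl⟩ | ⟨k, y, -, rfl, rfl⟩ | ⟨k, k', y, y', -, rfl, rfl⟩ |
    ⟨k, y, -, rfl, rfl⟩ | ⟨i, j, rfl, rfl⟩ | ⟨rfl, rfl⟩ | ⟨k, y, rfl, rfl⟩ |
    ⟨k, y, rfl, rfl⟩ | ⟨rfl, rfl⟩ | ⟨rfl, rfl⟩ | ⟨rfl, rfl⟩ | ⟨rfl, rfl⟩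
  · rw [h1, satPot_s, satPot_lit]; split_ifs <;> linarith
  · rw [h2, satPot_lit, satPot_lit]; split_ifs <;> linarith
  · rw [h3, satPot_lit, satPot_u1]; split_ifs <;> linarith
  · rw [h4, satPot_u2, satPot_var]; split_ifs <;> linarith
  · rw [h5, satPot_var, satPot_var]; split_ifs <;> linarith
  · rw [h6, satPot_var, satPot_u3]; split_ifs <;> linarith
  · rw [h7, satPot_lit, satPot_var]; split_ifs <;> linarith
  · rw [h8, satPot_u2, satPot_t]; linarith
  · have h0 := hc (nMid k y, nT)
    rw [h9, satPot_var, satPot_mid]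
    split_ifs with hr
    · have := hR k y hr
      linarith
    · linarith
  · rw [h10, satPot_mid, satPot_t]; linarith
  · rw [h11, satPot_u1, satPot_u2]; linarith
  · rw [h12, satPot_u3, satPot_u4]; linarith
  · rw [h13, satPot_u4, satPot_u5]; linarith
  · rw [h14, satPot_u5, satPot_t]; linarith

/-! ### Behaviour of the agent at a single node -/

theorem addc_nonneg (hc : CostConfig c') : ∀ e ∈ G.E, 0 ≤ addc G c' e :=
  fun e he => add_nonneg (G.c_nonneg e he) (hc e)

/-- From a visited node other than `t` the agent takes a step of perceived cost at most `1`. -/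
theorem exists_step (hβ0 : 0 < β) (hG : IsSatGraph φ β ε G)
    (hmot : MotivatingConfig G β (1 / β) c') {v : SatNode ℓ m} (hvt : v ≠ nT)
    (hv : AgentReach G.E (addc G c') nS nT β (1 / β) v) :
    ∃ w, AgentReach G.E (addc G c') nS nT β (1 / β) w ∧ SatEdge φ v w ∧ Reaches G.E w nT ∧
      etaCost G.E (addc G c') nT β (v, w) = zetaCost G.E (addc G c') nT β v ∧
      etaCost G.E (addc G c') nT β (v, w) ≤ 1 := by
  obtain ⟨hs, ht, hE, -⟩ := hG
  rw [MotivatingConfig, hs, ht] at hmot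
  obtain ⟨w, hw⟩ := hmot v hv hvt
  refine ⟨w, hv.step hw, (hE _ _).1 hw.2.1, hw.2.2.1, hw.2.2.2.1, ?_⟩
  have := hw.2.2.2.2
  rw [mul_one_div_cancel hβ0.ne'] at this
  exact hw.2.2.2.1.trans_le this

/-- The agent never visits an intermediate node. -/
theorem not_reach_mid (hβ0 : 0 < β) (hβ1 : β < 1) (hG : IsSatGraph φ β ε G)
    (hc : CostConfig c') (hmot : MotivatingConfig G β (1 / β) c') (k : Fin m) (y : Bool) :
    ¬ AgentReach G.E (addc G c') nS nT β (1 / β) (nMid k y) := by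
  intro h
  obtain ⟨w, -, he, -, -, hle⟩ := exists_step hβ0 hG hmot (by simp [nMid, nT]) h
  obtain rfl : w = nT := by
    simpa [SatEdge, nMid, nS, nLit, nVar, nU, nT] using he
  obtain ⟨-, -, -, -, -, -, -, -, -, -, -, -, h10, -⟩ := hG
  have hd := dcost_nonneg G.E (addc G c') nT (addc_nonneg hc) nT
  have := hc (nMid k y, nT)
  have := mul_nonneg hβ0.le hd
  simp only [etaCost, addc, h10] at hle this
  linarith

/-- The edges leaving a variable node. -/
theorem satEdge_var {k : Fin m} {y : Bool} {w : SatNode ℓ m} (h : SatEdge φ (nVar k y) w) :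
    (∃ (k' : Fin m) (y' : Bool), (k' : ℕ) = (k : ℕ) + 1 ∧ w = nVar k' y') ∨
      ((k : ℕ) = m - 1 ∧ w = nU 2) ∨ w = nMid k y := by
  simp only [SatEdge, nVar, nS, nLit, nU, nMid, nT] at h ⊢
  simp at h ⊢
  grind

/-- The edges leaving a literal node. -/
theorem satEdge_lit {i : Fin ℓ} {j : Fin 3} {w : SatNode ℓ m} (h : SatEdge φ (nLit i j) w) :
    (∃ (i' : Fin ℓ) (j' : Fin 3), (i' : ℕ) = (i : ℕ) + 1 ∧ w = nLit i' j') ∨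
      ((i : ℕ) = ℓ - 1 ∧ w = nU 0) ∨ w = nVar (φ i j).1 (!(φ i j).2) := by
  simp only [SatEdge, nVar, nS, nLit, nU, nMid, nT] at h ⊢
  simp at h ⊢
  grind

/-- From a visited variable node the agent moves forward. -/
theorem var_step (hβ0 : 0 < β) (hβ1 : β < 1) (hG : IsSatGraph φ β ε G)
    (hc : CostConfig c') (hmot : MotivatingConfig G β (1 / β) c') {k : Fin m} {y : Bool}
    (h : AgentReach G.E (addc G c') nS nT β (1 / β) (nVar k y)) :
    ∃ w, AgentReach G.E (addc G c') nS nT β (1 / β) w ∧ Reaches G.E w nT ∧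
      etaCost G.E (addc G c') nT β (nVar k y, w) = zetaCost G.E (addc G c') nT β (nVar k y) ∧
      ((∃ (k' : Fin m) (y' : Bool), (k' : ℕ) = (k : ℕ) + 1 ∧ w = nVar k' y') ∨
        ((k : ℕ) = m - 1 ∧ w = nU 2)) := by
  obtain ⟨w, hw, he, hr, heq, -⟩ := exists_step hβ0 hG hmot (by simp [nVar, nT]) h
  rcases satEdge_var he with h1 | h1 | rfl
  · exact ⟨w, hw, hr, heq, Or.inl h1⟩
  · exact ⟨w, hw, hr, heq, Or.inr h1⟩
  · exact absurd hw (not_reach_mid hβ0 hβ1 hG hc hmot k y)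

/-- At a visited variable node the configuration raises the cost of the type-three shortcut by
at least the cost of a forward edge. -/
theorem shortcut_extra (hβ0 : 0 < β) (hβ1 : β < 1) (hf : 0 < (1 - β) ^ 3 - ε)
    (hG : IsSatGraph φ β ε G) (hc : CostConfig c')
    (hmot : MotivatingConfig G β (1 / β) c') (k : Fin m) (y : Bool)
    (h : AgentReach G.E (addc G c') nS nT β (1 / β) (nVar k y)) :
    (1 - β) ^ 3 - ε ≤ c' (nVar k y, nMid k y) + c' (nMid k y, nT) := by
  obtain ⟨w, -, hr, heq, hw⟩ := var_step hβ0 hβ1 hG hc hmot h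
  -- The empty set `R` gives the unconditional bound `2 - β` on the distance from `w`.
  have hlow := le_dcost hβ0 hβ1 hf hG hc (fun _ => False) (fun _ _ h => h.elim) w hr
  obtain ⟨-, -, hE, -, -, -, -, h5, h6, -, -, h9, h10, -⟩ := hG
  have hsq : 0 ≤ (1 - β) ^ 2 := sq_nonneg _
  have hfwd : (1 - β) ^ 3 - ε ≤ addc G c' (nVar k y, w) ∧
      2 - β ≤ dcost G.E (addc G c') nT w := by
    have := hc (nVar k y, w)
    rcases hw with ⟨k', y', -, rfl⟩ | ⟨-, rfl⟩
    · simp only [addc, h5]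
      refine ⟨by linarith, ?_⟩
      simpa [satPot_var] using hlow
    · simp only [addc, h6]
      refine ⟨by linarith, ?_⟩
      rw [satPot_u3] at hlow
      linarith
  have hvz : (nVar k y, nMid k y) ∈ G.E := by
    rw [hE]; simp [SatEdge, nVar, nMid, nS, nLit, nU, nT]
  have hzt : (nMid k y, nT) ∈ G.E := by
    rw [hE]; simp [SatEdge, nVar, nMid, nS, nLit, nU, nT]
  -- The forward step to `w` is no worse than the plan through the intermediate node.
  have hle := zetaCost_le G.E (addc G c') nT β hβ0.le (addc_nonneg hc) _ _ hvz
    ⟨[nMid k y, nT], List.isChain_pair.mpr hzt, rfl, rfl⟩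
  rw [← heq] at hle
  have hz := dcost_le_edge G.E (addc G c') nT (addc_nonneg hc) _ hzt
  have e1 := mul_le_mul_of_nonneg_left hfwd.2 hβ0.le
  have e2 := mul_le_mul_of_nonneg_left hz hβ0.le
  have e3 : β * c' (nMid k y, nT) ≤ c' (nMid k y, nT) :=
    mul_le_of_le_one_left (hc _) hβ1.le
  have e4 := hfwd.1
  simp only [etaCost] at hle
  have e5 : addc G c' (nVar k y, nMid k y) = c' (nVar k y, nMid k y) := by
    simp [addc, h9]
  have e6 : addc G c' (nMid k y, nT) = 2 - β + c' (nMid k y, nT) := by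
    simp [addc, h10]
  rw [e6, mul_add] at e2
  linarith

/-- The agent never follows a type-one shortcut. -/
theorem lit_step (hβ0 : 0 < β) (hβ1 : β < 1) (hf : 0 < (1 - β) ^ 3 - ε)
    (hG : IsSatGraph φ β ε G) (hc : CostConfig c')
    (hmot : MotivatingConfig G β (1 / β) c') {i : Fin ℓ} {j : Fin 3}
    (h : AgentReach G.E (addc G c') nS nT β (1 / β) (nLit i j)) :
    ∃ w, AgentReach G.E (addc G c') nS nT β (1 / β) w ∧ Reaches G.E w nT ∧
      etaCost G.E (addc G c') nT β (nLit i j, w) ≤ 1 ∧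
      ((∃ (i' : Fin ℓ) (j' : Fin 3), (i' : ℕ) = (i : ℕ) + 1 ∧ w = nLit i' j') ∨
        ((i : ℕ) = ℓ - 1 ∧ w = nU 0)) := by
  obtain ⟨w, hw, he, hr, -, hle⟩ := exists_step hβ0 hG hmot (by simp [nLit, nT]) h
  rcases satEdge_lit he with h1 | h1 | rfl
  · exact ⟨w, hw, hr, hle, Or.inl h1⟩
  · exact ⟨w, hw, hr, hle, Or.inr h1⟩
  -- The head of the shortcut would be visited, so its distance is at least `2 - β + f`.
  exfalso
  have hlow := le_dcost hβ0 hβ1 hf hG hc _ (shortcut_extra hβ0 hβ1 hf hG hc hmot) _ hr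
  have hlow' : 2 - β + ((1 - β) ^ 3 - ε) ≤
      dcost G.E (addc G c') nT (nVar (φ i j).1 (!(φ i j).2)) := by
    rwa [satPot_var, if_pos hw] at hlow
  obtain ⟨-, -, -, -, -, -, -, -, -, h7, -⟩ := hG
  have e1 := mul_le_mul_of_nonneg_left hlow' hβ0.le
  have e2 := hc (nLit i j, nVar (φ i j).1 (!(φ i j).2))
  have e3 := mul_pos hβ0 hf
  simp only [etaCost] at hle
  have e4 : addc G c' (nLit i j, nVar (φ i j).1 (!(φ i j).2)) =
      (1 - β) ^ 2 + c' (nLit i j, nVar (φ i j).1 (!(φ i j).2)) := by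
    simp [addc, h7]
  nlinarith

/-- If entering a literal node by a forward edge has perceived cost at most `1`, then its
type-one shortcut leads to a node that the agent does not visit. -/
theorem not_reach_of_eta_le (hβ0 : 0 < β) (hβ1 : β < 1) (hf : 0 < (1 - β) ^ 3 - ε)
    (hε : ε * (1 + β) < β * (1 - β) ^ 3)
    (hG : IsSatGraph φ β ε G) (hc : CostConfig c')
    (hmot : MotivatingConfig G β (1 / β) c') {i : Fin ℓ} {j : Fin 3} {a : SatNode ℓ m}
    (ha : G.c (a, nLit i j) = (1 - β) ^ 3 - ε) (hr : Reaches G.E (nLit i j) nT)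
    (hle : etaCost G.E (addc G c') nT β (a, nLit i j) ≤ 1) :
    ¬ AgentReach G.E (addc G c') nS nT β (1 / β) (nVar (φ i j).1 (!(φ i j).2)) := by
  intro h
  have hlow := le_dcost hβ0 hβ1 hf hG hc _ (shortcut_extra hβ0 hβ1 hf hG hc hmot) _ hr
  have hlow' : (1 - β) ^ 2 + (2 - β) + ((1 - β) ^ 3 - ε) ≤
      dcost G.E (addc G c') nT (nLit i j) := by
    rwa [satPot_lit, if_pos h] at hlow
  have e1 := mul_le_mul_of_nonneg_left hlow' hβ0.le
  have e2 := hc (a, nLit i j)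
  simp only [etaCost, addc, ha] at hle e1
  nlinarith

/-! ### The course of the greedy walk -/

/-- The agent visits a literal node of every clause, and the shortcut there leads to a variable
node that is not visited on any greedy walk. -/
theorem exists_lit (hβ0 : 0 < β) (hβ1 : β < 1) (hf : 0 < (1 - β) ^ 3 - ε)
    (hε : ε * (1 + β) < β * (1 - β) ^ 3)
    (hG : IsSatGraph φ β ε G) (hc : CostConfig c')
    (hmot : MotivatingConfig G β (1 / β) c') (i : Fin ℓ) :
    ∃ j, AgentReach G.E (addc G c') nS nT β (1 / β) (nLit i j) ∧
      ¬ AgentReach G.E (addc G c') nS nT β (1 / β) (nVar (φ i j).1 (!(φ i j).2)) := by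
  obtain ⟨n, hn⟩ := i
  induction n with
  | zero =>
    obtain ⟨w, hw, he, hr, -, hle⟩ :=
      exists_step hβ0 hG hmot (by simp [nS, nT]) AgentReach.start
    obtain ⟨i, j, hi, rfl⟩ : ∃ (i : Fin ℓ) (j : Fin 3), (i : ℕ) = 0 ∧ w = nLit i j := by
      simp only [SatEdge, nVar, nS, nLit, nU, nMid, nT] at he ⊢
      simp at he ⊢
      grind
    obtain rfl : i = ⟨0, hn⟩ := Fin.ext hi
    exact ⟨j, hw, not_reach_of_eta_le hβ0 hβ1 hf hε hG hc hmot (hG.2.2.2.1 _ _) hr hle⟩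
  | succ n ih =>
    obtain ⟨j, hj, -⟩ := ih (by omega)
    obtain ⟨w, hw, hr, hle, ⟨i', j', hi', rfl⟩ | ⟨hl, -⟩⟩ :=
      lit_step hβ0 hβ1 hf hG hc hmot hj
    · obtain rfl : i' = ⟨n + 1, hn⟩ := Fin.ext hi'
      exact ⟨j', hw,
        not_reach_of_eta_le hβ0 hβ1 hf hε hG hc hmot (hG.2.2.2.2.1 _ _ _ _) hr hle⟩
    · simp only at hl
      omega

/-- The agent visits a node of every variable. -/
theorem exists_var (hℓ : 0 < ℓ) (hβ0 : 0 < β) (hβ1 : β < 1) (hf : 0 < (1 - β) ^ 3 - ε)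
    (hε : ε * (1 + β) < β * (1 - β) ^ 3)
    (hG : IsSatGraph φ β ε G) (hc : CostConfig c')
    (hmot : MotivatingConfig G β (1 / β) c') (k : Fin m) :
    ∃ y, AgentReach G.E (addc G c') nS nT β (1 / β) (nVar k y) := by
  obtain ⟨n, hn⟩ := k
  induction n with
  | zero =>
    obtain ⟨j, hj, -⟩ := exists_lit hβ0 hβ1 hf hε hG hc hmot ⟨ℓ - 1, by omega⟩
    obtain ⟨w, hw, -, -, ⟨i', j', hi', -⟩ | ⟨-, rfl⟩⟩ :=
      lit_step hβ0 hβ1 hf hG hc hmot hj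
    · have := i'.2
      simp only at hi'
      omega
    obtain ⟨w, hw', he, -, -, -⟩ := exists_step hβ0 hG hmot (by simp [nU, nT]) hw
    obtain rfl : w = nU 1 := by
      simp only [SatEdge, nVar, nS, nLit, nU, nMid, nT] at he ⊢
      simpa using he
    obtain ⟨w, hw, he, -, -, hle⟩ := exists_step hβ0 hG hmot (by simp [nU, nT]) hw'
    have he : (∃ (k : Fin m) (y : Bool), (k : ℕ) = 0 ∧ w = nVar k y) ∨ w = nT := by
      simp only [SatEdge, nVar, nS, nLit, nU, nMid, nT] at he ⊢
      simp at he ⊢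
      grind
    rcases he with ⟨k, y, hk, rfl⟩ | rfl
    · obtain rfl : k = ⟨0, hn⟩ := Fin.ext hk
      exact ⟨y, hw⟩
    · exfalso
      obtain ⟨-, -, -, -, -, -, -, -, -, -, h8, -⟩ := hG
      have hd := dcost_nonneg G.E (addc G c') nT (addc_nonneg hc) nT
      have := hc (nU 1, nT)
      have := mul_nonneg hβ0.le hd
      simp only [etaCost, addc, h8] at hle this
      linarith
  | succ n ih =>
    obtain ⟨y, hy⟩ := ih (by omega)
    obtain ⟨w, hw, -, -, ⟨k', y', hk', rfl⟩ | ⟨hl, -⟩⟩ := var_step hβ0 hβ1 hG hc hmot hy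
    · obtain rfl : k' = ⟨n + 1, hn⟩ := Fin.ext hk'
      exact ⟨y', hw⟩
    · simp only at hl
      omega

/-- An assignment read off from visited variable nodes satisfies every clause. -/
theorem sat_of_reach (hβ0 : 0 < β) (hβ1 : β < 1) (hf : 0 < (1 - β) ^ 3 - ε)
    (hε : ε * (1 + β) < β * (1 - β) ^ 3)
    (hG : IsSatGraph φ β ε G) (hc : CostConfig c')
    (hmot : MotivatingConfig G β (1 / β) c') (τ : Fin m → Bool)
    (hτ : ∀ k, AgentReach G.E (addc G c') nS nT β (1 / β) (nVar k (τ k))) (i : Fin ℓ) :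
    ∃ j : Fin 3, τ (φ i j).1 = (φ i j).2 := by
  obtain ⟨j, -, hj⟩ := exists_lit hβ0 hβ1 hf hε hG hc hmot i
  refine ⟨j, ?_⟩
  by_contra hne
  refine hj ?_
  rw [← Bool.eq_not.mpr hne]
  exact hτ _

end Reduction

/-- If the 3-SAT reduction graph `G(φ, β, ε)` admits a cost
configuration motivating for the reward `1/β` (with
`0 < ε < min {(1−β)², β(1−β)³/(1+β), β(1−β)²/(1+β)}`), then `φ` has a satisfying
assignment; indeed, any assignment `τ` that selects, for each variable `x_k`, the
truth value `y` with `w_{k,y}` visited on a greedy walk of the agent, satisfies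
every clause of `φ`. -/
theorem stmt_16 {ℓ m : ℕ} (hℓ : 0 < ℓ) (hm : 0 < m)
    (φ : Fin ℓ → Fin 3 → Fin m × Bool) (β ε : ℝ)
    (hβ0 : 0 < β) (hβ1 : β < 1) (hε0 : 0 < ε)
    (hε : ε < min ((1 - β) ^ 2)
      (min (β * (1 - β) ^ 3 / (1 + β)) (β * (1 - β) ^ 2 / (1 + β))))
    (G : TaskGraph (SatNode ℓ m)) (hG : IsSatGraph φ β ε G)
    (hmotex : ∃ c' : SatNode ℓ m × SatNode ℓ m → ℝ,
      CostConfig c' ∧ MotivatingConfig G β (1 / β) c') :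
    (∃ τ : Fin m → Bool, ∀ i : Fin ℓ, ∃ j : Fin 3, τ (φ i j).1 = (φ i j).2) ∧
      ∀ c' : SatNode ℓ m × SatNode ℓ m → ℝ, CostConfig c' →
        MotivatingConfig G β (1 / β) c' →
        ∀ p : List (SatNode ℓ m), AgentWalk G.E (addc G c') G.s G.t β (1 / β) p →
          ∀ τ : Fin m → Bool, (∀ k : Fin m, nVar k (τ k) ∈ p) →
            ∀ i : Fin ℓ, ∃ j : Fin 3, τ (φ i j).1 = (φ i j).2 := by
  have hε1 : ε * (1 + β) < β * (1 - β) ^ 3 := by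
    rw [← lt_div_iff₀ (by linarith)]
    exact hε.trans_le ((min_le_right _ _).trans (min_le_left _ _))
  have hf : 0 < (1 - β) ^ 3 - ε := by
    have h3 : 0 < (1 - β) ^ 3 := pow_pos (by linarith) 3
    nlinarith
  refine ⟨?_, ?_⟩
  · obtain ⟨c', hc, hmot⟩ := hmotex
    choose τ hτ using exists_var hℓ hβ0 hβ1 hf hε1 hG hc hmot
    exact ⟨τ, sat_of_reach hβ0 hβ1 hf hε1 hG hc hmot τ hτ⟩
  · intro c' hc hmot p hp τ hτ
    refine sat_of_reach hβ0 hβ1 hf hε1 hG hc hmot τ fun k => ?_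
    rw [hG.1, hG.2.1] at hp
    exact agentReach_of_mem _ _ _ _ _ _ p hp.2 nS hp.1.2.1 AgentReach.start _ (hτ k)
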